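/- Fix natural numbers n, m and a vector w : Fin n → ℤ/2. Let P = MvPolynomial (Fin n) (ℤ/2) and let W = Σᵢ wᵢ·Xᵢ ∈ P. Define ℤ/2-linear maps d : (Fin m → ℤ/2) → (Fin m → ℤ/2) × (Fin m → Fin n → ℤ/2) by d(a) = (a, (j,i) ↦ aⱼ·wᵢ), and d' : (Fin m → ℤ/2) × (Fin m → Fin n → ℤ/2) → (Fin m → Fin n → ℤ/2) × (Fin m → P) by d'(f,g) = ( (j,i) ↦ fⱼ·wᵢ + g_{j,i} , j ↦ Σᵢ g_{j,i}·(Xᵢ² + W·Xᵢ) ). Then the sequence is exact at the middle term: the kernel of d' equals the range of d (in particular d' ∘ d = 0). -/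

import Mathlib

/-!
The vanishing of the first component of `d' (f, g)` reads `f j * w i + g j i = 0`, which in
characteristic two says `g j i = f j * w i`, i.e. `(f, g) = d f`; so `ker d' ≤ range d`.
Conversely, `d' ∘ d = 0` reduces to `∑ wᵢ (Xᵢ² + W Xᵢ) = ∑ wᵢ Xᵢ² + W² = 0` for `W = ∑ wᵢ Xᵢ`,
which holds because Frobenius is additive and fixes `ZMod 2`, so that `W² = ∑ wᵢ Xᵢ²`
(`sum_smul_sq_add_mul_eq_zero`).
-/

open MvPolynomial in
theorem sum_smul_sq_add_mul_eq_zero {n : ℕ} (w : Fin n → ZMod 2) :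
    ∑ i, w i • ((X i : MvPolynomial (Fin n) (ZMod 2)) ^ 2 +
      (∑ k, C (w k) * X k) * X i) = 0 := by
  have hsq : (∑ k, C (w k) * X k : MvPolynomial (Fin n) (ZMod 2)) ^ 2
      = ∑ k, C (w k) * X k ^ 2 := by
    rw [sum_pow_char 2]
    refine Finset.sum_congr rfl fun k _ => ?_
    rw [mul_pow, ← C_pow, ZMod.pow_card]
  calc ∑ i, w i • ((X i : MvPolynomial (Fin n) (ZMod 2)) ^ 2 + (∑ k, C (w k) * X k) * X i)
      = ∑ i, C (w i) * X i ^ 2 + (∑ k, C (w k) * X k) * ∑ i, C (w i) * X i := by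
        rw [Finset.mul_sum, ← Finset.sum_add_distrib]
        refine Finset.sum_congr rfl fun i _ => ?_
        rw [smul_eq_C_mul]
        ring
    _ = 0 := by rw [← hsq, ← sq, CharTwo.add_self_eq_zero]


open MvPolynomial in
/-- The linear-algebra core of the proof that `Ω₇(B(n,m,w₂)) = 0`:
the three-term sequence modelled on
`H⁰(K)⊗H⁴(K') → H⁰(K)⊗H⁶(K') ⊕ H²(K)⊗H⁴(K') → H²(K)⊗H⁶(K') ⊕ H⁴(K)⊗H⁴(K')`
is exact at the middle term. -/
theorem exactness_for_bordism_vanishing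
    (n m : ℕ) (w : Fin n → ZMod 2)
    (d : (Fin m → ZMod 2) →ₗ[ZMod 2]
      (Fin m → ZMod 2) × (Fin m → Fin n → ZMod 2))
    (d' : ((Fin m → ZMod 2) × (Fin m → Fin n → ZMod 2)) →ₗ[ZMod 2]
      (Fin m → Fin n → ZMod 2) × (Fin m → MvPolynomial (Fin n) (ZMod 2)))
    (hd : ∀ a : Fin m → ZMod 2, d a = (a, fun j i => a j * w i))
    (hd' : ∀ (f : Fin m → ZMod 2) (g : Fin m → Fin n → ZMod 2),
      d' (f, g) =
        (fun j i => f j * w i + g j i,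
         fun j => ∑ i, g j i •
           (X i ^ 2 + (∑ k, MvPolynomial.C (w k) * X k) * X i))) :
    LinearMap.ker d' = LinearMap.range d := by
  ext ⟨f, g⟩
  rw [LinearMap.mem_ker, LinearMap.mem_range, hd', Prod.mk_eq_zero]
  constructor
  · rintro ⟨h, -⟩
    refine ⟨f, ?_⟩
    rw [hd, Prod.mk.injEq]
    refine ⟨rfl, ?_⟩
    funext j i
    exact CharTwo.add_eq_zero.mp (congrFun (congrFun h j) i)
  · rintro ⟨a, ha⟩
    rw [hd, Prod.mk.injEq] at ha
    obtain ⟨rfl, rfl⟩ := ha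
    refine ⟨funext fun j => funext fun i => CharTwo.add_self_eq_zero _, funext fun j => ?_⟩
    simp only [mul_smul, ← Finset.smul_sum, sum_smul_sq_add_mul_eq_zero, smul_zero,
      Pi.zero_apply]
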